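/- Let ν be a measure on ℝ^d with ν({0}) = 0, α ∈ ℝ, m ≥ 1 an integer, and define Φ_α(ν)(B) = ∫_0^1 ν(s^{-1}B) s^{-α-1} ds. Then the (m+1)-fold iterate satisfies Φ_α^{m+1}(ν)(B) = (1/m!) ∫_0^1 ν(s^{-1}B) s^{-α-1} (log s^{-1})^m ds for all Borel sets B. -/

import Mathlib

open MeasureTheory
open scoped ENNReal Pointwise

lemma exists_envelope (G : ℝ → ℝ≥0∞) : ∃ g : ℝ → ℝ≥0∞, Measurable g ∧ g ≤ G ∧
    ∀ φ : ℝ → ℝ≥0∞, Measurable φ → φ ≤ G → φ ≤ᵐ[volume] g := by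
  let ρ := ENNReal.orderIsoIicOneBirational
  have hρ : Measurable ρ := ρ.toHomeomorph.measurable
  have hρ' : Measurable ρ.symm := ρ.symm.toHomeomorph.measurable
  obtain ⟨μ, hμf, hμ, -⟩ := exists_isFiniteMeasure_absolutelyContinuous (volume : Measure ℝ)
  obtain ⟨p, hp, hpG, hpi⟩ := exists_measurable_le_lintegral_eq μ (fun x => (ρ (G x) : ℝ≥0∞))
  have hp1 : ∀ x, p x ≤ 1 := fun x => (hpG x).trans (ρ (G x)).2
  refine ⟨fun x => ρ.symm ⟨p x, hp1 x⟩, hρ'.comp (hp.subtype_mk), fun x => ?_, ?_⟩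
  · rw [OrderIso.symm_apply_le]
    exact hpG x
  · intro φ hφ hφG
    have hm : Measurable (fun x => (ρ (φ x) : ℝ≥0∞)) := (hρ.comp hφ).subtype_val
    have h1 : ∫⁻ x, max (p x) (ρ (φ x) : ℝ≥0∞) ∂μ ≤ ∫⁻ x, p x ∂μ := by
      rw [← hpi]
      exact lintegral_mono fun x => max_le (hpG x) (ρ.monotone (hφG x))
    have hfin : ∫⁻ x, p x ∂μ ≠ ∞ := by
      refine ((lintegral_mono hp1).trans_lt ?_).ne
      simp
    have h2 := ae_eq_of_ae_le_of_lintegral_le (μ := μ) (f := p)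
      (g := fun x => max (p x) (ρ (φ x) : ℝ≥0∞)) (Filter.Eventually.of_forall fun x => le_max_left _ _)
      hfin (hp.max hm).aemeasurable h1
    have h3 := hμ.ae_le h2
    filter_upwards [h3] with x hx
    rw [OrderIso.le_symm_apply]
    change (ρ (φ x) : ℝ≥0∞) ≤ p x
    rw [hx]
    exact le_max_right _ _

lemma lintegral_envelope {G g h : ℝ → ℝ≥0∞} (hgG : g ≤ G)
    (hg : ∀ φ : ℝ → ℝ≥0∞, Measurable φ → φ ≤ G → φ ≤ᵐ[volume] g)
    (hh : Measurable h) (hfin : ∀ x, h x ≠ ∞) (S : Set ℝ) {t : ℝ} (ht : 0 < t) :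
    ∫⁻ s in S, G (t * s) * h s = ∫⁻ s in S, g (t * s) * h s := by
  apply le_antisymm
  · obtain ⟨φ, hφ, hφG, hi⟩ := exists_measurable_le_lintegral_eq (volume.restrict S)
      (fun s => G (t * s) * h s)
    rw [hi]
    apply lintegral_mono_ae
    apply ae_restrict_of_ae
    have h1 := hg (fun x => φ (t⁻¹ * x) / h (t⁻¹ * x)) (by fun_prop) (fun x => by
      apply ENNReal.div_le_of_le_mul
      have := hφG (t⁻¹ * x)
      simpa [mul_inv_cancel_left₀ ht.ne'] using this)
    have hq : Measure.QuasiMeasurePreserving (fun x : ℝ => t * x) volume volume := by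
      refine ⟨by fun_prop, ?_⟩
      rw [Real.map_volume_mul_left ht.ne']
      exact Measure.smul_absolutelyContinuous
    have h2 := hq.ae h1
    filter_upwards [h2] with x hx
    simp only [inv_mul_cancel_left₀ ht.ne'] at hx
    by_cases h0 : h x = 0
    · have := hφG x
      simp only [h0, mul_zero] at this ⊢
      exact this
    · exact (ENNReal.div_le_iff h0 (hfin x)).1 hx
  · exact lintegral_mono fun s => mul_le_mul_left (hgG _) _

lemma inner_int (n : ℕ) {u : ℝ} (hu : 0 < u) (hu1 : u < 1) :
    ∫⁻ s in Set.Ioo u 1, ENNReal.ofReal ((1 / (n.factorial : ℝ)) * (Real.log (s / u)) ^ n * s⁻¹)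
      = ENNReal.ofReal ((1 / ((n + 1).factorial : ℝ)) * (Real.log u⁻¹) ^ (n + 1)) := by
  have hd : ∀ s ∈ Set.uIcc u 1, HasDerivAt
      (fun s => (1 / ((n + 1).factorial : ℝ)) * (Real.log (s / u)) ^ (n + 1))
      ((1 / (n.factorial : ℝ)) * (Real.log (s / u)) ^ n * s⁻¹) s := by
    intro s hs
    rw [Set.uIcc_of_le hu1.le] at hs
    have hs0 : 0 < s := hu.trans_le hs.1
    have h1 : HasDerivAt (fun s => Real.log (s / u)) s⁻¹ s := by
      convert ((hasDerivAt_id s).div_const u).log (by simp [hs0.ne', hu.ne']) using 1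
      simp only [id]; field_simp; simp [hs0.ne']
    refine ((h1.pow (n + 1)).const_mul (1 / ((n + 1).factorial : ℝ))).congr_deriv ?_
    rw [Nat.factorial_succ]; push_cast; field_simp
  have hc : ContinuousOn (fun s => (1 / (n.factorial : ℝ)) * (Real.log (s / u)) ^ n * s⁻¹)
      (Set.Icc u 1) := by
    have : ∀ s ∈ Set.Icc u 1, s ≠ 0 := fun s hs => (hu.trans_le hs.1).ne'
    refine ContinuousOn.mul (continuousOn_const.mul (ContinuousOn.pow (ContinuousOn.log
      (continuousOn_id.div_const u) ?_) n)) (continuousOn_id.inv₀ this)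
    intro s hs
    exact div_ne_zero (this s hs) hu.ne'
  have hi : IntervalIntegrable (fun s => (1 / (n.factorial : ℝ)) * (Real.log (s / u)) ^ n * s⁻¹)
      volume u 1 := by
    apply ContinuousOn.intervalIntegrable
    rwa [Set.uIcc_of_le hu1.le]
  have hF := intervalIntegral.integral_eq_sub_of_hasDerivAt hd hi
  rw [intervalIntegral.integral_of_le hu1.le, integral_Ioc_eq_integral_Ioo] at hF
  rw [← ofReal_integral_eq_lintegral_ofReal, hF]
  · simp [div_self hu.ne']
  · exact (hc.integrableOn_Icc).mono_set Set.Ioo_subset_Icc_self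
  · refine (ae_restrict_iff' measurableSet_Ioo).2 (Filter.Eventually.of_forall fun s hs => ?_)
    have hs0 : 0 < s := hu.trans hs.1
    have : 0 ≤ Real.log (s / u) := Real.log_nonneg ((one_le_div hu).2 hs.1.le)
    simp only [Pi.zero_apply]
    positivity

lemma subst_int (F : ℝ → ℝ≥0∞) {s : ℝ} (hs : 0 < s) :
    ∫⁻ r in Set.Ioo (0:ℝ) 1, F r = ∫⁻ u in Set.Ioo (0:ℝ) s, ENNReal.ofReal s⁻¹ * F (s⁻¹ * u) := by
  have h := lintegral_image_eq_lintegral_abs_deriv_mul (s := Set.Ioo (0:ℝ) s)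
    (f := fun u => s⁻¹ * u) (f' := fun _ => s⁻¹) measurableSet_Ioo
    (fun x _ => by simpa using ((hasDerivAt_id x).const_mul s⁻¹).hasDerivWithinAt)
    (fun x _ y _ hxy => mul_left_cancel₀ (inv_ne_zero hs.ne') hxy) F
  have he : Set.image (fun u => s⁻¹ * u) (Set.Ioo (0:ℝ) s) = Set.Ioo 0 1 := by
    rw [Set.image_mul_left_Ioo (inv_pos.2 hs), mul_zero, inv_mul_cancel₀ hs.ne']
  rw [he, abs_of_pos (inv_pos.2 hs)] at h
  exact h

lemma step_int (n : ℕ) (β : ℝ) (f : ℝ → ℝ≥0∞) (hf : Measurable f) :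
    ∫⁻ s in Set.Ioo (0:ℝ) 1, (∫⁻ r in Set.Ioo (0:ℝ) 1, f (s * r) *
        ENNReal.ofReal ((1 / (n.factorial : ℝ)) * r ^ β * (Real.log r⁻¹) ^ n)) *
        ENNReal.ofReal (s ^ β)
      = ∫⁻ u in Set.Ioo (0:ℝ) 1, f u *
        ENNReal.ofReal ((1 / ((n + 1).factorial : ℝ)) * u ^ β * (Real.log u⁻¹) ^ (n + 1)) := by
  let K : ℝ → ℝ → ℝ≥0∞ := fun s u => if u < s then f u * ENNReal.ofReal (u ^ β) *
    ENNReal.ofReal ((1 / (n.factorial : ℝ)) * (Real.log (s / u)) ^ n * s⁻¹) else 0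
  have hK : Measurable (Function.uncurry K) := by
    refine Measurable.ite (measurableSet_lt measurable_snd measurable_fst) ?_ measurable_const
    fun_prop
  trans ∫⁻ s in Set.Ioo (0:ℝ) 1, ∫⁻ u in Set.Ioo (0:ℝ) 1, K s u
  · refine setLIntegral_congr_fun measurableSet_Ioo fun s hs => ?_
    have hs0 := hs.1
    rw [subst_int _ hs0, ← lintegral_mul_const' _ _ ENNReal.ofReal_ne_top]
    trans ∫⁻ u in Set.Ioo (0:ℝ) s, K s u
    · refine setLIntegral_congr_fun measurableSet_Ioo fun u hu => ?_
      have hu0 := hu.1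
      have e1 : 0 ≤ Real.log (s / u) := Real.log_nonneg ((one_le_div hu0).2 hu.2.le)
      have e2 : (s⁻¹ * u)⁻¹ = s / u := by field_simp
      have e3 : s ^ β * (s⁻¹ * u) ^ β = u ^ β := by
        rw [← Real.mul_rpow hs0.le (by positivity), mul_inv_cancel_left₀ hs0.ne']
      simp only [K, if_pos hu.2, mul_inv_cancel_left₀ hs0.ne', e2]
      rw [mul_comm (ENNReal.ofReal s⁻¹), mul_assoc, mul_assoc, mul_assoc (f u),
        ← ENNReal.ofReal_mul (by positivity), ← ENNReal.ofReal_mul (by positivity),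
        ← ENNReal.ofReal_mul (by positivity), ← e3]
      congr 2
      ring
    · rw [← lintegral_indicator measurableSet_Ioo, ← lintegral_indicator measurableSet_Ioo]
      congr 1; ext u
      simp only [Set.indicator, Set.mem_Ioo, K]
      have := hs.2
      split_ifs <;> first | rfl | (exfalso; grind)
  · rw [lintegral_lintegral_swap hK.aemeasurable]
    refine setLIntegral_congr_fun measurableSet_Ioo fun u hu => ?_
    have hu0 := hu.1
    trans ∫⁻ s in Set.Ioo u 1, f u * ENNReal.ofReal (u ^ β) *
      ENNReal.ofReal ((1 / (n.factorial : ℝ)) * (Real.log (s / u)) ^ n * s⁻¹)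
    · rw [← lintegral_indicator measurableSet_Ioo, ← lintegral_indicator measurableSet_Ioo]
      congr 1; ext s
      simp only [Set.indicator, Set.mem_Ioo, K]
      split_ifs <;> first | rfl | (exfalso; grind)
    · rw [lintegral_const_mul _ (by fun_prop), inner_int n hu0 hu.2, mul_assoc,
        ← ENNReal.ofReal_mul (by positivity)]
      congr 2
      ring

/-- The (m+1)-fold iterate of Φ_α(ν)(B) = ∫_0^1 ν(s⁻¹B)s^{-α-1}ds satisfies
Φ_α^{m+1}(ν)(B) = (1/m!) ∫_0^1 ν(s⁻¹B) s^{-α-1} (log s⁻¹)^m ds. -/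
theorem stmt_6 {d : ℕ} (α : ℝ) (m : ℕ) (hm : 1 ≤ m)
    (ν : Measure (Fin d → ℝ)) (hν0 : ν {0} = 0)
    (Φ : (Set (Fin d → ℝ) → ℝ≥0∞) → (Set (Fin d → ℝ) → ℝ≥0∞))
    (hΦ : ∀ f : Set (Fin d → ℝ) → ℝ≥0∞, ∀ B : Set (Fin d → ℝ),
      Φ f B = ∫⁻ s in Set.Ioo (0:ℝ) 1, f (s⁻¹ • B) * ENNReal.ofReal (s ^ (-α - 1 : ℝ)))
    (B : Set (Fin d → ℝ)) (hB : MeasurableSet B) :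
    Φ^[m + 1] (fun A => ν A) B
      = ∫⁻ s in Set.Ioo (0:ℝ) 1,
          ν (s⁻¹ • B) * ENNReal.ofReal
            ((1 / (Nat.factorial m : ℝ)) * s ^ (-α - 1 : ℝ) * (Real.log s⁻¹) ^ m) := by
  obtain ⟨g, hgm, hgG, hg⟩ := exists_envelope (fun u => ν (u⁻¹ • B))
  have key : ∀ n : ℕ, ∀ t : ℝ, 0 < t → Φ^[n + 1] (fun A => ν A) (t⁻¹ • B)
      = ∫⁻ s in Set.Ioo (0:ℝ) 1, g (t * s) * ENNReal.ofReal
            ((1 / (Nat.factorial n : ℝ)) * s ^ (-α - 1 : ℝ) * (Real.log s⁻¹) ^ n) := by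
    intro n
    induction n with
    | zero =>
      intro t ht
      have := lintegral_envelope (h := fun s => ENNReal.ofReal (s ^ (-α - 1 : ℝ))) hgG hg
        (by fun_prop) (fun _ => ENNReal.ofReal_ne_top) (Set.Ioo 0 1) ht
      simp only [zero_add, Function.iterate_one, hΦ, smul_smul]
      simpa [mul_inv, mul_comm] using this
    | succ n ih =>
      intro t ht
      rw [Function.iterate_succ_apply', hΦ, ← step_int n (-α - 1) (fun u => g (t * u)) (by fun_prop)]
      refine setLIntegral_congr_fun measurableSet_Ioo fun s hs => ?_
      rw [smul_smul, ← mul_inv, mul_comm s t, ih (t * s) (mul_pos ht hs.1)]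
      simp only [mul_assoc]
  have h1 := key m 1 one_pos
  have h2 := lintegral_envelope (h := fun s => ENNReal.ofReal
    ((1 / (Nat.factorial m : ℝ)) * s ^ (-α - 1 : ℝ) * (Real.log s⁻¹) ^ m)) hgG hg
        (by fun_prop) (fun _ => ENNReal.ofReal_ne_top) (Set.Ioo 0 1) one_pos
  rw [← h2] at h1
  simpa only [inv_one, one_smul, one_mul] using h1
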